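/- For every integer r ≥ 1 there exist η > 0 and A ≥ 1, depending only on r and not on q or 𝐤, such that for every prime power q and every tuple 𝐤 = (k₁,…,k_r) of positive integers, | c_𝐤(q) − (1−q^{−1})^{−r} · ∏_c (1−q^{−|c|})^{r+2}(1 + (r+2)q^{−|c|} + q^{−2|c|}) | ≤ A · q^{−η·min_i k_i}, where the product runs over all closed points c of ℙ¹ over 𝔽_q. -/

import Mathlib

/-!
The idea is that, up to the poles coming from `r` copies of the zeta function of `ℙ¹`, the function
`Z` extends holomorphically to a polydisc of radius larger than `1`, with a bound uniform in `q`.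

Write `P_c(t) = Λ_c(t) ∏ i, (1 - (t i / q) ^ |c|)`, the polynomial `locP`. The linear terms of `P_c`
in the quantities `(t i / q) ^ |c|` and `q ^ (-|c|)` cancel, so that, with `v = q ^ (1 / 8)`,
`P_c - 1 = O(v ^ (-12 |c|))` uniformly on the polydisc `|t i| ≤ v ^ 2`
(`norm_locP_sub_one_le_pow`). There are at most about `q ^ n = v ^ (8 n)` closed points of degree
`n`, so the product `G` of the `P_c` converges there and is bounded by a constant depending only on
`r` (`norm_prod_locP_le`). On the other hand `∏_c (1 - u ^ |c|) = (1 - q u) (1 - u)`, proved by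
sieving the monic polynomials (`sieve`, `hasProd_affine`, `hasProd_zeta`). Therefore
`Z(t) = G(t) ∏ i, ((1 - t i) (1 - t i / q))⁻¹`, see `tprod_Lam`.

Put `H(t) = G(t) ∏ i, (1 - t i / q)⁻¹`, again bounded for `|t i| ≤ v ^ 2`. Division by
`∏ i, (1 - t i)` replaces the coefficients `h m` of `H` by the partial sums `∑_{m ≤ k} h m`, which
differ from `H(1, …, 1)` by a tail that Cauchy's estimate bounds by `O(v ^ (-min k))`
(`partial_sum_bound`). Finally `H(1, …, 1)` is the constant in the theorem, because `P_c(1, …, 1)` is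
the local factor `tauFactor` (`locP_one`). So `η = 1 / 8` works.

The holomorphy of the infinite product `G` is not needed: the argument is run for the products over
finite sets `S` of closed points, with bounds independent of `S`, and the limit over `S` is taken at
the end (`coef_bound`).
-/

open scoped BigOperators
open Filter

noncomputable section

/-- Closed points of ℙ¹ over a field: monic irreducible polynomials together with the
point at infinity. -/
def ClosedPoint (K : Type) [Field K] : Type :=
  {p : Polynomial K // p.Monic ∧ Irreducible p} ⊕ Unit

/-- The degree `|c|` of a closed point. -/
def cpDeg {K : Type} [Field K] : ClosedPoint K → ℕ
  | Sum.inl p => p.1.natDegree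
  | Sum.inr _ => 1

/-- The local Euler factor `(1 − q^{−n})^{r+2} (1 + (r+2) q^{−n} + q^{−2n})` of the
Tamagawa number at a closed point of degree `n`. -/
def tauFactor (q r n : ℕ) : ℝ :=
  (1 - ((q : ℝ)⁻¹) ^ n) ^ (r + 2) *
    (1 + (r + 2) * ((q : ℝ)⁻¹) ^ n + ((q : ℝ)⁻¹) ^ (2 * n))

/-- The local factor `Λ_c` of the virtual height zeta function at a closed point of
degree `n` (complex version). -/
def Lam (q r n : ℕ) (t : Fin r → ℂ) : ℂ :=
  1 - (r + 2 : ℂ) * ((q : ℂ) ^ (2 * n))⁻¹ + 2 * (r : ℂ) * ((q : ℂ) ^ (3 * n))⁻¹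
    - ((r : ℂ) - 1) * ((q : ℂ) ^ (4 * n))⁻¹
    + (1 - 2 * ((q : ℂ) ^ n)⁻¹ + 2 * ((q : ℂ) ^ (3 * n))⁻¹ - ((q : ℂ) ^ (4 * n))⁻¹) *
      ∑ i : Fin r, ((t i / (q : ℂ)) ^ n / (1 - (t i / (q : ℂ)) ^ n))

/-! ### Power series in several variables -/

/-- Distributivity: a finite product of absolutely convergent series is the absolutely convergent
sum, over all multi-indices, of the products of terms. -/
lemma hasSum_pi {𝕜 : Type*} [NormedField 𝕜] [CompleteSpace 𝕜] {ι : Type} [Fintype ι]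
    (f : ι → ℕ → 𝕜) (hf : ∀ i, Summable fun n => ‖f i n‖) :
    (Summable fun m : ι → ℕ => ‖∏ i, f i (m i)‖) ∧
      HasSum (fun m : ι → ℕ => ∏ i, f i (m i)) (∏ i, ∑' n, f i n) := by
  let P : (α : Type) → [Fintype α] → Prop := fun α _ => ∀ f : α → ℕ → 𝕜,
    (∀ i, Summable fun n => ‖f i n‖) → (Summable fun m : α → ℕ => ‖∏ i, f i (m i)‖) ∧
      HasSum (fun m : α → ℕ => ∏ i, f i (m i)) (∏ i, ∑' n, f i n)
  refine Fintype.induction_empty_option (P := P) ?_ ?_ ?_ ι f hf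
  · intro α β _ e ih f hf
    let _ := Fintype.ofEquiv β e.symm
    obtain ⟨h1, h2⟩ := ih (fun a => f (e a)) (fun a => hf _)
    let E : (α → ℕ) ≃ (β → ℕ) := Equiv.arrowCongr e (Equiv.refl _)
    have key : ∀ m : α → ℕ, ∏ i, f i (E m i) = ∏ a, f (e a) (m a) := fun m => by
      rw [← e.prod_comp]; simp [E]
    rw [← E.summable_iff, ← E.hasSum_iff, ← e.prod_comp (fun i => ∑' n, f i n)]
    simp only [Function.comp_def, key]
    exact ⟨h1, h2⟩
  · intro f _
    have hs : HasSum (fun m : PEmpty → ℕ => ∏ i, f i (m i)) (∏ i, ∑' n, f i n) := by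
      convert! hasSum_unique (fun m : PEmpty → ℕ => ∏ i, f i (m i)) using 1
    exact ⟨(hasSum_unique (fun m : PEmpty → ℕ => ‖∏ i, f i (m i)‖)).summable, hs⟩
  · intro α _ ih f hf
    obtain ⟨h1, h2⟩ := ih (fun a => f (some a)) (fun a => hf _)
    let E := Equiv.piOptionEquivProd (β := fun _ : Option α => ℕ)
    rw [← E.symm.summable_iff, ← E.symm.hasSum_iff, Fintype.prod_option]
    have key : ∀ m : ℕ × (α → ℕ), ∏ i, f i (E.symm m i)
        = f none m.1 * ∏ a, f (some a) (m.2 a) := fun m => by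
      rw [Fintype.prod_option]; rfl
    simp only [Function.comp_def, key]
    have hn : Summable fun m : ℕ × (α → ℕ) => ‖f none m.1 * ∏ a, f (some a) (m.2 a)‖ := by
      apply Summable.mul_norm (hf none) h1
    refine ⟨hn, ?_⟩
    have h0 : HasSum (f none) (∑' n, f none n) := (hf none).of_norm.hasSum
    have hm : Summable fun m : ℕ × (α → ℕ) => f none m.1 * ∏ a, f (some a) (m.2 a) := by
      apply summable_mul_of_summable_norm (hf none) h1
    apply HasSum.mul h0 h2 hm

/-- `F` is the sum of the power series with coefficients `a` on the closed polydisc of radius `R`.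
Since convergence is unordered, it is automatically absolute. -/
def IsPS {r : ℕ} (R : ℝ) (a : (Fin r → ℕ) → ℂ) (F : (Fin r → ℂ) → ℂ) : Prop :=
  ∀ t : Fin r → ℂ, (∀ i, ‖t i‖ ≤ R) → HasSum (fun m => a m * ∏ i, t i ^ m i) (F t)

section PowerSeries

variable {r : ℕ} {R : ℝ}

/-- The coefficients of the product of two power series. The sum is finite, and is written as a
`tsum` over the fibre of addition so that it matches the regrouping of the double series. -/
def conv (a b : (Fin r → ℕ) → ℂ) (n : Fin r → ℕ) : ℂ :=
  ∑' p : {p : (Fin r → ℕ) × (Fin r → ℕ) // p.1 + p.2 = n}, a p.1.1 * b p.1.2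

lemma IsPS.mul {a b : (Fin r → ℕ) → ℂ} {F G : (Fin r → ℂ) → ℂ} (hF : IsPS R a F)
    (hG : IsPS R b G) : IsPS R (conv a b) (fun t => F t * G t) := by
  intro t ht
  have h1 := hF t ht
  have h2 := hG t ht
  have hs : Summable fun p : (Fin r → ℕ) × (Fin r → ℕ) =>
      (a p.1 * ∏ i, t i ^ p.1 i) * (b p.2 * ∏ i, t i ^ p.2 i) := by
    apply summable_mul_of_summable_norm h1.summable.norm h2.summable.norm
  have h3 : HasSum (fun p : (Fin r → ℕ) × (Fin r → ℕ) =>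
      (a p.1 * ∏ i, t i ^ p.1 i) * (b p.2 * ∏ i, t i ^ p.2 i)) (F t * G t) := by
    apply HasSum.mul h1 h2 hs
  rw [← (Equiv.sigmaFiberEquiv
    (fun p : (Fin r → ℕ) × (Fin r → ℕ) => p.1 + p.2)).hasSum_iff] at h3
  have h4 := h3.sigma (fun n => (h3.summable.sigma_factor n).hasSum)
  convert! h4 using 1
  funext n
  rw [conv, ← tsum_mul_right]
  refine tsum_congr ?_
  rintro ⟨p, hp⟩
  simp only [Function.comp_def, Equiv.sigmaFiberEquiv, Equiv.coe_fn_mk, ← hp, Pi.add_apply, pow_add,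
    Finset.prod_mul_distrib]
  ring

lemma isPS_const (c : ℂ) : IsPS R (fun m : Fin r → ℕ => if m = 0 then c else 0) (fun _ => c) := by
  intro t _
  convert hasSum_single (0 : Fin r → ℕ) ?_ using 1
  · simp
  · intro m hm; simp [hm]

lemma IsPS.add {a b : (Fin r → ℕ) → ℂ} {F G : (Fin r → ℂ) → ℂ} (hF : IsPS R a F)
    (hG : IsPS R b G) : IsPS R (a + b) (fun t => F t + G t) := by
  intro t ht
  simpa only [Pi.add_apply, add_mul] using (hF t ht).add (hG t ht)

lemma isPS_coord (j : Fin r) :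
    IsPS R (fun m : Fin r → ℕ => if m = Pi.single j 1 then 1 else 0) (fun t => t j) := by
  intro t _
  convert hasSum_single (Pi.single j 1 : Fin r → ℕ) ?_ using 1
  · simp [Pi.single_apply, pow_ite]
  · intro m hm; simp [hm]

lemma isPS_geom (z : ℂ) (hz : R * ‖z‖ < 1) : IsPS R (fun m : Fin r → ℕ => ∏ i, z ^ m i)
    (fun t => ∏ i, (1 - t i * z)⁻¹) := by
  intro t ht
  have hlt : ∀ i, ‖t i * z‖ < 1 := fun i => by
    rw [norm_mul]
    exact (mul_le_mul_of_nonneg_right (ht i) (norm_nonneg _)).trans_lt hz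
  have := (hasSum_pi (fun i n => (t i * z) ^ n) (fun i => by
    simp only [norm_pow]
    exact summable_geometric_of_lt_one (norm_nonneg _) (hlt i))).2
  have h2 : ∀ i, ∑' n : ℕ, (t i * z) ^ n = (1 - t i * z)⁻¹ :=
    fun i => tsum_geometric_of_norm_lt_one (hlt i)
  simp only [h2] at this
  convert! this using 1
  funext m
  simp only [mul_pow, Finset.prod_mul_distrib]
  ring

/-- Multiplying by `∏ i, (1 - t i)⁻¹` turns the coefficients into partial sums over boxes. -/
lemma conv_one (a : (Fin r → ℕ) → ℂ) (k : Fin r → ℕ) :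
    conv a (fun _ => 1) k = ∑' m : {m // m ≤ k}, a m := by
  let e : {p : (Fin r → ℕ) × (Fin r → ℕ) // p.1 + p.2 = k} ≃ {m // m ≤ k} :=
    { toFun := fun p => ⟨p.1.1, le_self_add.trans_eq p.2⟩
      invFun := fun m => ⟨(m.1, k - m.1), add_tsub_cancel_of_le m.2⟩
      left_inv := fun p => by
        rcases p with ⟨⟨x, y⟩, h⟩
        simp only [Subtype.mk.injEq, Prod.mk.injEq, true_and]
        rw [← h]; simp
      right_inv := fun m => rfl }
  rw [← e.tsum_eq, conv]
  simp [e]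

open UnitAddTorus in
/-- Cauchy's estimate on the polycircle of radius `ρ`. The series, restricted to the polycircle, is
a Fourier series on the torus converging uniformly, and its `k`-th Fourier coefficient is at most
the supremum of `F`. -/
lemma cauchy_estimate {a : (Fin r → ℕ) → ℂ} {F : (Fin r → ℂ) → ℂ} {ρ M : ℝ} (hρ : 0 ≤ ρ)
    (hF : ∀ t : Fin r → ℂ, (∀ i, ‖t i‖ = ρ) → HasSum (fun m => a m * ∏ i, t i ^ m i) (F t))
    (hM : ∀ t : Fin r → ℂ, (∀ i, ‖t i‖ = ρ) → ‖F t‖ ≤ M) (k : Fin r → ℕ) :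
    ‖a k‖ * ∏ i, ρ ^ k i ≤ M := by
  let b : (Fin r → ℕ) → ℂ := fun m => a m * ∏ i, (ρ : ℂ) ^ m i
  let c : (Fin r → ℕ) → C(UnitAddTorus (Fin r), ℂ) := fun m => b m • mFourier (fun i => (m i : ℤ))
  have hb : Summable fun m => ‖b m‖ := by
    have := (hF (fun _ => (ρ : ℂ)) (fun i => by simp [abs_of_nonneg hρ])).summable.norm
    exact this
  have hc : Summable c := by
    refine Summable.of_norm ?_
    simpa only [c, norm_smul, mFourier_norm, mul_one] using hb
  obtain ⟨g, hg⟩ := hc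
  have hgF : ∀ x, g x = F (fun i => ρ * fourier 1 (x i)) := by
    intro x
    have h1 := (ContinuousMap.evalCLM ℂ x).hasSum hg
    have h2 := hF (fun i => ρ * fourier 1 (x i)) (fun i => by simp [abs_of_nonneg hρ, Circle.norm_coe])
    refine h1.unique ?_
    convert! h2 using 1
    funext m
    simp only [c, b, ContinuousMap.evalCLM_apply, mul_pow, Finset.prod_mul_distrib,
      ContinuousMap.smul_apply, smul_eq_mul, mFourier, ContinuousMap.coe_mk, mul_assoc]
    congr 2
    refine Finset.prod_congr rfl fun i _ => ?_
    simp only [fourier_apply, one_zsmul, natCast_zsmul, AddCircle.toCircle_nsmul, Circle.coe_pow]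
  have hgM : ‖g‖ ≤ M := by
    rw [ContinuousMap.norm_le_of_nonempty]
    intro x
    rw [hgF]
    exact hM _ (fun i => by simp [abs_of_nonneg hρ, Circle.norm_coe])
  -- The torus carries the product of the normalised Haar measures of the circles.
  let _ : MeasureTheory.MeasureSpace UnitAddCircle := ⟨AddCircle.haarAddCircle⟩
  have _ : MeasureTheory.IsProbabilityMeasure
      (MeasureTheory.volume : MeasureTheory.Measure UnitAddCircle) :=
    inferInstanceAs (MeasureTheory.IsProbabilityMeasure AddCircle.haarAddCircle)
  have horth := orthonormal_mFourier (d := Fin r)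
  let L := ContinuousMap.toLp (E := ℂ) 2
    (MeasureTheory.volume : MeasureTheory.Measure (UnitAddTorus (Fin r))) ℂ
  have h3 := L.hasSum hg
  have h4 := (innerSL ℂ (L (mFourier (fun i => (k i : ℤ))))).hasSum h3
  have h5 : ∀ m : Fin r → ℕ, innerSL ℂ (L (mFourier (fun i => (k i : ℤ)))) (L (c m)) =
      if m = k then b k else 0 := by
    intro m
    have h6 := (orthonormal_iff_ite.mp horth) (fun i => (k i : ℤ)) (fun i => (m i : ℤ))
    simp only [c, map_smul, innerSL_apply_apply, smul_eq_mul]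
    refine (congrArg (b m * ·) h6).trans ?_
    have : ((fun i => (k i : ℤ)) = fun i => (m i : ℤ)) ↔ m = k := by
      simp only [funext_iff, Nat.cast_inj, eq_comm]
    simp only [this]
    split_ifs with h
    · rw [h, mul_one]
    · rw [mul_zero]
  simp only [h5] at h4
  have h7 := h4.unique (hasSum_ite_eq k (b k))
  have h8 : ‖L (mFourier (fun i => (k i : ℤ)))‖ = 1 := horth.1 _
  have h9 : ‖L g‖ ≤ ‖g‖ := by
    refine (L.le_of_opNorm_le (ContinuousMap.toLp_norm_le _) g).trans ?_
    simp [MeasureTheory.measureUnivNNReal]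
  have h10 : ‖b k‖ ≤ M := by
    rw [← h7, innerSL_apply_apply]
    refine (norm_inner_le_norm _ _).trans ?_
    rw [h8, one_mul]
    exact h9.trans hgM
  simpa [b, norm_mul, norm_prod, abs_of_nonneg hρ] using h10

/-- If `H` is bounded by `M` on the polydisc of radius `v ^ 2 > 1`, then the coefficient of index `k`
of `H(t) / ∏ i, (1 - t i)` differs from `H(1, …, 1)` by the tail `∑ h m` over those `m` that are not
`≤ k`. Cauchy's estimate gives `‖h m‖ ≤ M v ^ (-2 |m|)`; one factor `v ^ (-|m|)` is at most
`v ^ (-K)` on the tail, and the other one makes the sum converge. -/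
lemma partial_sum_bound {h : (Fin r → ℕ) → ℂ} {H : (Fin r → ℂ) → ℂ} {v M : ℝ} (hv : 1 < v)
    (hH : IsPS (v ^ 2) h H)
    (hM : ∀ t : Fin r → ℂ, (∀ i, ‖t i‖ ≤ v ^ 2) → ‖H t‖ ≤ M) (k : Fin r → ℕ) (K : ℕ)
    (hK : ∀ i, K ≤ k i) :
    ‖conv h (fun _ => 1) k - H (fun _ => 1)‖ ≤ M * v⁻¹ ^ K * (1 - v⁻¹)⁻¹ ^ r := by
  have hv0 : 0 < v := by linarith
  have hvi : v⁻¹ < 1 := inv_lt_one_of_one_lt₀ hv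
  have hM0 : 0 ≤ M := (norm_nonneg _).trans (hM 0 (fun i => by simp; positivity))
  have h1 : HasSum h (H fun _ => 1) := by
    have := hH (fun _ => 1) (fun i => by rw [norm_one]; exact one_le_pow₀ hv.le)
    simpa using this
  have hb : ∀ m, ‖h m‖ ≤ M * ((∏ i, v⁻¹ ^ m i) * ∏ i, v⁻¹ ^ m i) := by
    intro m
    have := cauchy_estimate (sq_nonneg v) (fun t ht => hH t (fun i => (ht i).le))
      (fun t ht => hM t (fun i => (ht i).le)) m
    have hp : 0 < ∏ i, (v ^ 2) ^ m i := Finset.prod_pos fun i _ => by positivity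
    rw [← le_div_iff₀ hp] at this
    refine this.trans_eq ?_
    rw [← Finset.prod_mul_distrib, div_eq_mul_inv, ← Finset.prod_inv_distrib]
    congr 1
    refine Finset.prod_congr rfl fun i _ => ?_
    rw [← mul_pow, ← inv_pow]; congr 1; field_simp
  have hs := (hasSum_pi (ι := Fin r) (fun _ n => v⁻¹ ^ n) (fun i => by
    simpa [abs_of_pos hv0] using summable_geometric_of_lt_one (by positivity) hvi)).2
  rw [tsum_geometric_of_lt_one (by positivity) hvi, Finset.prod_const, Finset.card_univ,
    Fintype.card_fin] at hs
  have h2 := h1.summable.tsum_subtype_add_tsum_subtype_compl {m | m ≤ k}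
  rw [h1.tsum_eq] at h2
  rw [conv_one, ← h2]
  have h3 : (∑' m : {m // m ≤ k}, h m) = ∑' m : ({m | m ≤ k} : Set _), h m := rfl
  rw [h3, sub_add_cancel_left, norm_neg, mul_assoc, mul_left_comm]
  rw [tsum_subtype]
  refine tsum_of_norm_bounded ((hs.mul_left M).mul_left (v⁻¹ ^ K)) ?_
  intro m
  by_cases hm : m ≤ k
  · rw [Set.indicator_of_notMem (by simpa using hm), norm_zero]
    have : 0 ≤ ∏ i, v⁻¹ ^ m i := Finset.prod_nonneg fun i _ => by positivity
    positivity
  · rw [Set.indicator_of_mem (by simpa using hm)]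
    refine (hb m).trans ?_
    rw [mul_left_comm]
    have h0 : 0 ≤ ∏ i, v⁻¹ ^ m i := Finset.prod_nonneg fun i _ => by positivity
    have : ∏ i, v⁻¹ ^ m i ≤ v⁻¹ ^ K := by
      rw [Pi.le_def, not_forall] at hm
      obtain ⟨j, hj⟩ := hm
      rw [Finset.prod_pow_eq_pow_sum]
      refine pow_le_pow_of_le_one (by positivity) hvi.le ?_
      have := Finset.single_le_sum (f := m) (fun i _ => Nat.zero_le _) (Finset.mem_univ j)
      have := hK j
      omega
    gcongr

end PowerSeries

/-! ### The local factors -/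

/-- The local factor `Λ_c` at a point of degree `n`, multiplied by `∏ i, (1 - (t i / q) ^ n)` to
clear its denominators; a polynomial in `t`. -/
def locP (q r n : ℕ) (t : Fin r → ℂ) : ℂ :=
  (1 - (r + 2 : ℂ) * ((q : ℂ) ^ (2 * n))⁻¹ + 2 * (r : ℂ) * ((q : ℂ) ^ (3 * n))⁻¹
    - ((r : ℂ) - 1) * ((q : ℂ) ^ (4 * n))⁻¹) * ∏ i, (1 - (t i / (q : ℂ)) ^ n)
    + (1 - 2 * ((q : ℂ) ^ n)⁻¹ + 2 * ((q : ℂ) ^ (3 * n))⁻¹ - ((q : ℂ) ^ (4 * n))⁻¹) *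
      ∑ i : Fin r, ((t i / (q : ℂ)) ^ n * ∏ j ∈ Finset.univ.erase i, (1 - (t j / (q : ℂ)) ^ n))

lemma Lam_mul_prod (q r n : ℕ) (t : Fin r → ℂ) (h : ∀ i, (t i / (q : ℂ)) ^ n ≠ 1) :
    Lam q r n t * ∏ i, (1 - (t i / (q : ℂ)) ^ n) = locP q r n t := by
  rw [Lam, locP, add_mul, mul_assoc _ (∑ i : Fin r, _), Finset.sum_mul]
  congr 2
  refine Finset.sum_congr rfl fun i _ => ?_
  rw [← Finset.mul_prod_erase _ _ (Finset.mem_univ i)]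
  have : 1 - (t i / (q : ℂ)) ^ n ≠ 0 := sub_ne_zero.mpr (h i).symm
  field_simp

lemma locP_one (q r n : ℕ) (hr : 1 ≤ r) :
    locP q r n (fun _ => 1) = (tauFactor q r n : ℂ) := by
  obtain ⟨k, rfl⟩ : ∃ k, r = k + 1 := ⟨r - 1, by omega⟩
  have h : ∀ i : Fin (k + 1), (Finset.univ.erase i).card = k := fun i => by simp
  simp only [locP, tauFactor, Finset.prod_const, h, Finset.sum_const, Finset.card_univ,
    Fintype.card_fin, ← inv_pow, one_div]
  push_cast
  simp only [mul_comm _ n, pow_mul, nsmul_eq_mul]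
  generalize ((q : ℂ)⁻¹) ^ n = x
  push_cast
  ring

/-- With `E = ∏ (1 - s i)` and `D = ∑ s i ∏_{j ≠ i} (1 - s j)`, the linear terms of `E` and `D` are
opposite, so that `E + D - 1` is quadratically small. -/
lemma prod_sum_bounds {ι : Type*} [DecidableEq ι] (S : Finset ι) (s : ι → ℂ) {σ : ℝ} (h0 : 0 ≤ σ)
    (h1 : σ ≤ 1) (hs : ∀ i, ‖s i‖ ≤ σ) :
    ‖∏ i ∈ S, (1 - s i)‖ ≤ 2 ^ S.card ∧
    ‖∑ i ∈ S, s i * ∏ j ∈ S.erase i, (1 - s j)‖ ≤ S.card * 2 ^ S.card * σ ∧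
    ‖∏ i ∈ S, (1 - s i) + ∑ i ∈ S, s i * ∏ j ∈ S.erase i, (1 - s j) - 1‖
      ≤ S.card ^ 2 * 2 ^ S.card * σ ^ 2 := by
  induction S using Finset.induction_on with
  | empty => simp
  | insert a S ha ih =>
    obtain ⟨hE, hD, hED⟩ := ih
    have e1 : ∑ i ∈ insert a S, s i * ∏ j ∈ (insert a S).erase i, (1 - s j) =
        s a * ∏ i ∈ S, (1 - s i) + (1 - s a) * ∑ i ∈ S, s i * ∏ j ∈ S.erase i, (1 - s j) := by
      rw [Finset.sum_insert ha, Finset.erase_insert ha, Finset.mul_sum]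
      congr 1
      refine Finset.sum_congr rfl fun i hi => ?_
      have hai : a ≠ i := fun h => ha (h ▸ hi)
      rw [Finset.erase_insert_of_ne hai, Finset.prod_insert (by simp [ha])]
      ring
    rw [e1, Finset.prod_insert ha, Finset.card_insert_of_notMem ha]
    set E := ∏ i ∈ S, (1 - s i)
    set D := ∑ i ∈ S, s i * ∏ j ∈ S.erase i, (1 - s j)
    have hsa := hs a
    have h1s : ‖1 - s a‖ ≤ 2 := (norm_sub_le _ _).trans (by rw [norm_one]; linarith)
    have hc : (0 : ℝ) ≤ S.card := Nat.cast_nonneg _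
    have hp : (1 : ℝ) ≤ 2 ^ S.card := one_le_pow₀ (by norm_num)
    refine ⟨?_, ?_, ?_⟩
    · rw [norm_mul, pow_succ']
      gcongr
    · calc ‖s a * E + (1 - s a) * D‖ ≤ σ * 2 ^ S.card + 2 * (S.card * 2 ^ S.card * σ) := by
            refine (norm_add_le _ _).trans ?_
            rw [norm_mul, norm_mul]
            gcongr
        _ ≤ _ := by
            push_cast
            rw [pow_succ]
            have : 0 ≤ 2 ^ S.card * σ := by positivity
            nlinarith
    · have e2 : (1 - s a) * E + (s a * E + (1 - s a) * D) - 1 = (E + D - 1) - s a * D := by ring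
      rw [e2]
      calc ‖(E + D - 1) - s a * D‖
          ≤ S.card ^ 2 * 2 ^ S.card * σ ^ 2 + σ * (S.card * 2 ^ S.card * σ) := by
            refine (norm_sub_le _ _).trans ?_
            rw [norm_mul]
            gcongr
        _ ≤ _ := by
            push_cast
            rw [pow_succ 2 S.card]
            have : 0 ≤ 2 ^ S.card * σ ^ 2 := by positivity
            nlinarith [mul_nonneg this hc, mul_nonneg this (mul_nonneg hc hc)]

/-- A constant for the estimate `|P_c - 1| ≤ C σ ^ 2` of `norm_locP_sub_one_le`. -/
def locC (r : ℕ) : ℝ := 2 ^ r * (r ^ 2 + 9 * r + 3)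

lemma norm_locP_sub_one_le (q r n : ℕ) (t : Fin r → ℂ) {σ : ℝ} (h1 : σ ≤ 1)
    (hq : ((q : ℝ) ^ n)⁻¹ ≤ σ) (ht : ∀ i, ‖(t i / (q : ℂ)) ^ n‖ ≤ σ) :
    ‖locP q r n t - 1‖ ≤ locC r * σ ^ 2 := by
  have h0 : 0 ≤ σ := le_trans (by positivity) hq
  obtain ⟨hE, hD, hED⟩ := prod_sum_bounds Finset.univ (fun i => (t i / (q : ℂ)) ^ n) h0 h1 ht
  simp only [Finset.card_univ, Fintype.card_fin] at hE hD hED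
  rw [locP]
  set E := ∏ i, (1 - (t i / (q : ℂ)) ^ n)
  set D := ∑ i : Fin r, ((t i / (q : ℂ)) ^ n *
    ∏ j ∈ Finset.univ.erase i, (1 - (t j / (q : ℂ)) ^ n))
  simp only [mul_comm _ n, pow_mul, ← inv_pow] at hq ⊢
  have hx : ‖((q : ℂ)⁻¹) ^ n‖ ≤ σ := by simpa using hq
  set x := ((q : ℂ)⁻¹) ^ n
  have hx1 : ‖x‖ ≤ 1 := hx.trans h1
  have e : (1 - (r + 2 : ℂ) * x ^ 2 + 2 * r * x ^ 3 - (r - 1) * x ^ 4) * E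
      + (1 - 2 * x + 2 * x ^ 3 - x ^ 4) * D - 1 =
      (E + D - 1) + x ^ 2 * (-(r + 2 : ℂ) + 2 * r * x - (r - 1) * x ^ 2) * E
        + x * (-2 + 2 * x ^ 2 - x ^ 3) * D := by ring
  rw [e]
  have hA : ‖-(r + 2 : ℂ) + 2 * r * x - (r - 1) * x ^ 2‖ ≤ 4 * r + 3 := by
    have a1 : ‖(r + 2 : ℂ)‖ ≤ r + 2 := (norm_add_le _ _).trans (by simp)
    have a2 : ‖(r - 1 : ℂ)‖ ≤ r + 1 := (norm_sub_le _ _).trans (by simp)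
    have a3 : ‖(2 * r * x : ℂ)‖ ≤ 2 * r := by
      rw [norm_mul, norm_mul, Complex.norm_natCast]; simp
      exact mul_le_of_le_one_right (by positivity) hx1
    have a4 : ‖(r - 1 : ℂ) * x ^ 2‖ ≤ r + 1 := by
      rw [norm_mul, norm_pow]
      exact (mul_le_of_le_one_right (norm_nonneg _) (pow_le_one₀ (norm_nonneg _) hx1)).trans a2
    calc _ ≤ ‖(r + 2 : ℂ)‖ + ‖(2 * r * x : ℂ)‖ + ‖(r - 1 : ℂ) * x ^ 2‖ := by
          refine (norm_sub_le _ _).trans (add_le_add_left ((norm_add_le _ _).trans ?_) _)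
          rw [norm_neg]
      _ ≤ _ := by linarith
  have hB : ‖-2 + 2 * x ^ 2 - x ^ 3‖ ≤ 5 := by
    have b1 : ‖x ^ 2‖ ≤ 1 := by rw [norm_pow]; exact pow_le_one₀ (norm_nonneg _) hx1
    have b2 : ‖x ^ 3‖ ≤ 1 := by rw [norm_pow]; exact pow_le_one₀ (norm_nonneg _) hx1
    have b3 : ‖2 * x ^ 2‖ ≤ 2 := by rw [norm_mul]; simp only [Complex.norm_ofNat]; linarith
    have := norm_sub_le (-2 + 2 * x ^ 2) (x ^ 3)
    have := norm_add_le (-2) (2 * x ^ 2)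
    have : ‖(-2 : ℂ)‖ = 2 := by simp
    linarith
  calc _ ≤ r ^ 2 * 2 ^ r * σ ^ 2 + σ ^ 2 * (4 * r + 3) * 2 ^ r + σ * 5 * (r * 2 ^ r * σ) := by
        refine (norm_add_le _ _).trans (add_le_add ((norm_add_le _ _).trans (add_le_add hED ?_)) ?_)
        · rw [norm_mul, norm_mul, norm_pow]
          gcongr
        · rw [norm_mul, norm_mul]
          gcongr
    _ = locC r * σ ^ 2 := by rw [locC]; ring

/-! ### Monic polynomials, closed points and the zeta function of the projective line -/

section ClosedPoints

open Polynomial Topology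

variable {K : Type} [Field K]

lemma cpDeg_pos (cp : ClosedPoint K) : 1 ≤ cpDeg cp := by
  rcases cp with p | _
  · exact p.2.2.natDegree_pos
  · exact le_rfl

/-- A monic irreducible polynomial, regarded as a monic polynomial. -/
def toMonic (p : {p : K[X] // p.Monic ∧ Irreducible p}) : {f : K[X] // f.Monic} := ⟨p.1, p.2.1⟩

lemma toMonic_injective : Function.Injective (toMonic (K := K)) := by
  intro a b h
  have h' : a.1 = b.1 := congrArg (fun x : {f : K[X] // f.Monic} => x.1) h
  exact Subtype.ext h'

variable [Fintype K]

/-- There are `q ^ n` monic polynomials of degree `n`, in the form of the sum of a constant. -/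
lemma sum_fiber (n : ℕ) {E : Type*} [NormedAddCommGroup E] [NormedSpace ℝ E] (c : E) :
    HasSum (fun _ : {f : {f : K[X] // f.Monic} // f.1.natDegree = n} => c)
      (((Fintype.card K : ℝ) ^ n) • c) := by
  let e : {f : {f : K[X] // f.Monic} // f.1.natDegree = n} ≃ (Fin n → K) :=
    (Equiv.subtypeSubtypeEquivSubtypeInter _ (fun f : K[X] => f.natDegree = n)).trans
      ((monicEquivDegreeLT n).trans (degreeLTEquiv K n).toEquiv)
  have : HasSum (fun _ : Fin n → K => c) (((Fintype.card K : ℝ) ^ n) • c) := by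
    classical
    convert! hasSum_fintype (fun _ : Fin n → K => c) using 1
    simp [← Nat.cast_smul_eq_nsmul ℝ]
  rw [← e.hasSum_iff] at this
  exact this

lemma summable_monic (z : ℝ) (hz : 0 ≤ z) (hqz : Fintype.card K * z < 1) :
    Summable (fun f : {f : K[X] // f.Monic} => z ^ f.1.natDegree) := by
  rw [← (Equiv.sigmaFiberEquiv (fun f : {f : K[X] // f.Monic} => f.1.natDegree)).summable_iff]
  rw [summable_sigma_of_nonneg (fun _ => by simp only [Function.comp_def]; positivity)]
  have h : ∀ n : ℕ, HasSum (fun f : {f : {f : K[X] // f.Monic} // f.1.natDegree = n} =>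
      z ^ f.1.1.natDegree) ((Fintype.card K * z) ^ n) := fun n => by
    have := sum_fiber (K := K) n (z ^ n)
    rw [smul_eq_mul, ← mul_pow] at this
    convert! this using 1
    funext f
    rw [f.2]
  refine ⟨fun n => (h n).summable, ?_⟩
  simp only [Function.comp_def, Equiv.sigmaFiberEquiv, Equiv.coe_fn_mk, (h _).tsum_eq]
  exact summable_geometric_of_lt_one (by positivity) hqz

lemma hasSum_monic (u : ℂ) (hu : Fintype.card K * ‖u‖ < 1) :
    HasSum (fun f : {f : K[X] // f.Monic} => u ^ f.1.natDegree) (1 - Fintype.card K * u)⁻¹ := by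
  have hs : Summable (fun f : {f : K[X] // f.Monic} => u ^ f.1.natDegree) := by
    refine Summable.of_norm ?_
    simpa only [norm_pow] using summable_monic ‖u‖ (norm_nonneg _) hu
  have h : ∀ n : ℕ, HasSum (fun f : {f : {f : K[X] // f.Monic} // f.1.natDegree = n} =>
      u ^ f.1.1.natDegree) ((Fintype.card K * u) ^ n) := fun n => by
    have := sum_fiber (K := K) n (u ^ n)
    convert! this using 1
    · funext f
      rw [f.2]
    · simp [mul_pow]
  rw [← (Equiv.sigmaFiberEquiv
    (fun f : {f : K[X] // f.Monic} => f.1.natDegree)).summable_iff] at hs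
  rw [← (Equiv.sigmaFiberEquiv (fun f : {f : K[X] // f.Monic} => f.1.natDegree)).hasSum_iff]
  refine HasSum.sigma_of_hasSum ?_ (fun n => h n) hs
  exact hasSum_geometric_of_norm_lt_one (by simpa using hu)

open Classical in
/-- The generating series of the monic polynomials divisible by no element of `S`. Adjoining a prime
`p` to `S` removes the multiples of `p` from those already sieved by `S`. -/
lemma sieve (u : ℂ) (hu : Fintype.card K * ‖u‖ < 1)
    (S : Finset {p : K[X] // p.Monic ∧ Irreducible p}) :
    HasSum (fun f : {f : K[X] // f.Monic} => if ∀ p ∈ S, ¬ p.1 ∣ f.1 then u ^ f.1.natDegree else 0)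
      ((∏ p ∈ S, (1 - u ^ p.1.natDegree)) * (1 - Fintype.card K * u)⁻¹) := by
  induction S using Finset.induction_on with
  | empty => simpa using hasSum_monic u hu
  | insert p S hp ih =>
    let g : {f : K[X] // f.Monic} → {f : K[X] // f.Monic} := fun f => ⟨p.1 * f.1, p.2.1.mul f.2⟩
    have hg : Function.Injective g := by
      intro a b hab
      exact Subtype.ext (mul_left_cancel₀ p.2.1.ne_zero (congrArg Subtype.val hab))
    have h2 : HasSum (fun f : {f : K[X] // f.Monic} =>
        if (∀ l ∈ S, ¬ l.1 ∣ f.1) ∧ p.1 ∣ f.1 then u ^ f.1.natDegree else 0)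
        (u ^ p.1.natDegree * ((∏ p ∈ S, (1 - u ^ p.1.natDegree)) *
          (1 - Fintype.card K * u)⁻¹)) := by
      rw [← hg.hasSum_iff]
      · convert! ih.mul_left (u ^ p.1.natDegree) using 1
        funext f
        have hd : ∀ l ∈ S, (l.1 ∣ p.1 * f.1 ↔ l.1 ∣ f.1) := by
          intro l hl
          rw [l.2.2.prime.dvd_mul, or_iff_right]
          intro hlp
          have := eq_of_monic_of_associated l.2.1 p.2.1 (l.2.2.associated_of_dvd p.2.2 hlp)
          exact hp ((Subtype.ext this : l = p) ▸ hl)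
        have hc : ((∀ l ∈ S, ¬ l.1 ∣ p.1 * f.1) ∧ p.1 ∣ p.1 * f.1) ↔ ∀ l ∈ S, ¬ l.1 ∣ f.1 := by
          simp only [dvd_mul_right, and_true]
          exact forall₂_congr fun l hl => not_congr (hd l hl)
        simp only [Function.comp_def, g, hc, mul_ite, mul_zero,
          p.2.1.natDegree_mul f.2, pow_add]
      · intro f hf
        rw [if_neg]
        rintro ⟨-, w, hw⟩
        refine hf ⟨⟨w, ?_⟩, Subtype.ext hw.symm⟩
        exact p.2.1.of_mul_monic_left (hw ▸ f.2)
    convert! ih.sub h2 using 1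
    · funext f
      simp only [Finset.mem_insert, forall_eq_or_imp]
      by_cases h1 : p.1 ∣ f.1 <;> by_cases h3 : ∀ l ∈ S, ¬ l.1 ∣ f.1 <;> simp [h1]
    · rw [Finset.prod_insert hp]; ring

/-- The Euler product of the zeta function of the affine line, inverted. As `S` grows, the sieved
sum of `sieve` tends to its only surviving term `f = 1`. -/
lemma hasProd_affine (u : ℂ) (hu : Fintype.card K * ‖u‖ < 1) :
    HasProd (fun p : {p : K[X] // p.Monic ∧ Irreducible p} => 1 - u ^ p.1.natDegree)
      (1 - Fintype.card K * u) := by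
  classical
  have hne : (1 - Fintype.card K * u : ℂ) ≠ 0 := by
    intro h
    rw [sub_eq_zero] at h
    have := congrArg norm h
    simp at this
    linarith
  have hlim : Tendsto (fun S : Finset {p : K[X] // p.Monic ∧ Irreducible p} =>
      ∑' f : {f : K[X] // f.Monic}, if ∀ p ∈ S, ¬ p.1 ∣ f.1 then u ^ f.1.natDegree else 0) atTop
      (𝓝 (∑' f : {f : K[X] // f.Monic}, if f = ⟨1, monic_one⟩ then 1 else 0)) := by
    refine tendsto_tsum_of_dominated_convergence (summable_monic ‖u‖ (norm_nonneg _) hu) ?_ ?_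
    · intro f
      refine tendsto_const_nhds.congr' ?_
      by_cases hf : f = ⟨1, monic_one⟩
      · refine Eventually.of_forall fun S => ?_
        have : ∀ p ∈ S, ¬ p.1 ∣ (1 : K[X]) := fun p _ h =>
          p.2.2.not_isUnit (isUnit_of_dvd_one h)
        subst hf
        dsimp only
        rw [if_pos rfl, if_pos this, natDegree_one, pow_zero]
      · have hnu : ¬ IsUnit f.1 := fun h => hf (Subtype.ext (f.2.eq_one_of_isUnit h))
        obtain ⟨p, hp, hirr, hdvd⟩ := exists_monic_irreducible_factor f.1 hnu
        filter_upwards [eventually_ge_atTop ({⟨p, hp, hirr⟩} : Finset _)] with S hS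
        rw [if_neg hf, if_neg]
        intro h
        exact h ⟨p, hp, hirr⟩ (hS (Finset.mem_singleton_self _)) hdvd
    · refine Eventually.of_forall fun S f => ?_
      split_ifs
      · rw [norm_pow]
      · rw [norm_zero]; positivity
  rw [tsum_ite_eq] at hlim
  simp only [(sieve u hu _).tsum_eq] at hlim
  have := hlim.mul_const (1 - Fintype.card K * u : ℂ)
  simp only [mul_assoc, inv_mul_cancel₀ hne, mul_one, one_mul] at this
  exact this

lemma tsum_monic (z : ℝ) (hz : 0 ≤ z) (hqz : Fintype.card K * z < 1) :
    ∑' f : {f : K[X] // f.Monic}, z ^ f.1.natDegree = (1 - Fintype.card K * z)⁻¹ := by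
  have h : Fintype.card K * ‖(z : ℂ)‖ < 1 := by rwa [Complex.norm_real, Real.norm_of_nonneg hz]
  have h2 := (hasSum_monic (K := K) (z : ℂ) h).tsum_eq
  apply Complex.ofReal_injective
  push_cast
  exact h2

lemma summable_cpDeg_affine (z : ℝ) (hz : 0 ≤ z) (hqz : Fintype.card K * z < 1) :
    Summable (fun p : {p : K[X] // p.Monic ∧ Irreducible p} => z ^ p.1.natDegree) ∧
      ∑' p : {p : K[X] // p.Monic ∧ Irreducible p}, z ^ p.1.natDegree
        ≤ (1 - Fintype.card K * z)⁻¹ := by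
  have hs := summable_monic (K := K) z hz hqz
  have h1 := hs.comp_injective (toMonic_injective (K := K))
  have h2 := tsum_comp_le_tsum_of_inj hs (fun f => pow_nonneg hz _) (toMonic_injective (K := K))
  rw [tsum_monic z hz hqz] at h2
  exact ⟨h1, h2⟩

lemma summable_cpDeg (z : ℝ) (hz : 0 ≤ z) (hqz : Fintype.card K * z < 1) :
    Summable (fun cp : ClosedPoint K => z ^ cpDeg cp) ∧
      ∑' cp : ClosedPoint K, z ^ cpDeg cp ≤ (1 - Fintype.card K * z)⁻¹ + 1 := by
  obtain ⟨h1, h1'⟩ := summable_cpDeg_affine z hz hqz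
  have h2 : HasSum (fun _ : Unit => z ^ 1) z := by
    simp
  have h3 : HasSum (fun cp : ClosedPoint K => z ^ cpDeg cp)
      (∑' p : {p : K[X] // p.Monic ∧ Irreducible p}, z ^ p.1.natDegree + z) :=
    HasSum.sum (f := fun cp : {p : K[X] // p.Monic ∧ Irreducible p} ⊕ Unit =>
      z ^ cpDeg (K := K) cp) h1.hasSum h2
  refine ⟨h3.summable, ?_⟩
  rw [h3.tsum_eq]
  have hq : (1 : ℝ) ≤ Fintype.card K := by exact_mod_cast Fintype.card_pos
  have : z ≤ 1 := by nlinarith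
  linarith

/-- The Euler product of the zeta function of `ℙ¹`, inverted. -/
lemma hasProd_zeta (u : ℂ) (hu : Fintype.card K * ‖u‖ < 1) :
    HasProd (fun cp : ClosedPoint K => 1 - u ^ cpDeg cp)
      ((1 - Fintype.card K * u) * (1 - u)) := by
  have h2 : HasProd (fun _ : Unit => 1 - u ^ 1) (1 - u) := by
    simp
  exact HasProd.sum (f := fun cp : {p : K[X] // p.Monic ∧ Irreducible p} ⊕ Unit =>
      1 - u ^ cpDeg (K := K) cp) (hasProd_affine u hu) h2

end ClosedPoints

/-! ### The algebra of convergent power series -/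

section Assembly

open Topology

variable {r : ℕ} {R : ℝ}

lemma IsPS.mono {R' : ℝ} {a : (Fin r → ℕ) → ℂ} {F : (Fin r → ℂ) → ℂ} (hF : IsPS R a F)
    (h : R' ≤ R) : IsPS R' a F := fun t ht => hF t fun i => (ht i).trans h

/-- The algebra of functions of `r` complex variables that are given by a power series converging
absolutely on the closed polydisc of radius `R`. -/
def psAlg (r : ℕ) (R : ℝ) : Subalgebra ℂ ((Fin r → ℂ) → ℂ) where
  carrier := {F | ∃ a, IsPS R a F}
  mul_mem' := by
    rintro F G ⟨a, ha⟩ ⟨b, hb⟩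
    exact ⟨_, ha.mul hb⟩
  add_mem' := by
    rintro F G ⟨a, ha⟩ ⟨b, hb⟩
    exact ⟨_, ha.add hb⟩
  algebraMap_mem' c := ⟨_, isPS_const c⟩

lemma mem_psAlg {F : (Fin r → ℂ) → ℂ} : F ∈ psAlg r R ↔ ∃ a, IsPS R a F := Iff.rfl

lemma const_mem_psAlg (c : ℂ) : (fun _ : Fin r → ℂ => c) ∈ psAlg r R :=
  mem_psAlg.mpr ⟨_, isPS_const c⟩

lemma mul_mem_psAlg {F G : (Fin r → ℂ) → ℂ} (hF : F ∈ psAlg r R) (hG : G ∈ psAlg r R) :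
    (fun t => F t * G t) ∈ psAlg r R := mul_mem hF hG

lemma add_mem_psAlg {F G : (Fin r → ℂ) → ℂ} (hF : F ∈ psAlg r R) (hG : G ∈ psAlg r R) :
    (fun t => F t + G t) ∈ psAlg r R := add_mem hF hG

lemma prod_mem_psAlg {ι : Type*} (T : Finset ι) {F : ι → (Fin r → ℂ) → ℂ}
    (hF : ∀ i ∈ T, F i ∈ psAlg r R) : (fun t => ∏ i ∈ T, F i t) ∈ psAlg r R := by
  have := prod_mem hF
  rwa [Finset.prod_fn] at this

lemma sum_mem_psAlg {ι : Type*} (T : Finset ι) {F : ι → (Fin r → ℂ) → ℂ}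
    (hF : ∀ i ∈ T, F i ∈ psAlg r R) : (fun t => ∑ i ∈ T, F i t) ∈ psAlg r R := by
  have := sum_mem hF
  rwa [Finset.sum_fn] at this

lemma locP_mem (q n : ℕ) : locP q r n ∈ psAlg r R := by
  have hs : ∀ i : Fin r, (fun t : Fin r → ℂ => (t i / (q : ℂ)) ^ n) ∈ psAlg r R := fun i => by
    have h1 : (fun t : Fin r → ℂ => t i) ∈ psAlg r R := mem_psAlg.mpr ⟨_, isPS_coord i⟩
    simp only [div_eq_mul_inv]
    exact pow_mem (mul_mem_psAlg h1 (const_mem_psAlg _)) n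
  have h1s : ∀ i : Fin r, (fun t : Fin r → ℂ => 1 - (t i / (q : ℂ)) ^ n) ∈ psAlg r R := fun i =>
    sub_mem (const_mem_psAlg 1) (hs i)
  have h : locP q r n = fun t => locP q r n t := rfl
  rw [h]
  simp only [locP]
  apply add_mem_psAlg
  · apply mul_mem_psAlg (const_mem_psAlg _)
    exact prod_mem_psAlg _ fun i _ => h1s i
  · apply mul_mem_psAlg (const_mem_psAlg _)
    apply sum_mem_psAlg
    intro i _
    apply mul_mem_psAlg (hs i)
    exact prod_mem_psAlg _ fun i _ => h1s i

lemma continuous_locP (q n : ℕ) : Continuous (fun t : Fin r → ℂ => locP q r n t) := by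
  unfold locP
  fun_prop

/-- On the polydisc of radius `v ^ 2 = q ^ (1 / 4)`, both `|t i / q| ^ n` and `q ^ (-n)` are at most
`σ = v ^ (-6 n)`. -/
lemma norm_locP_sub_one_le_pow (q n : ℕ) {v : ℝ} (hv : 1 < v) (hq : v ^ 8 = q) (t : Fin r → ℂ)
    (ht : ∀ i, ‖t i‖ ≤ v ^ 2) : ‖locP q r n t - 1‖ ≤ locC r * (v⁻¹ ^ 12) ^ n := by
  have hv0 : 0 < v := by linarith
  have hvi : v⁻¹ ≤ 1 := inv_le_one_of_one_le₀ hv.le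
  have hvi0 : 0 ≤ v⁻¹ := by positivity
  have := norm_locP_sub_one_le q r n t (σ := (v⁻¹ ^ 6) ^ n)
    (pow_le_one₀ (by positivity) (pow_le_one₀ hvi0 hvi))
    (by
      rw [← hq, ← inv_pow, ← inv_pow]
      exact pow_le_pow_left₀ (by positivity) (pow_le_pow_of_le_one hvi0 hvi (by norm_num)) n)
    (fun i => by
      rw [norm_pow, norm_div, Complex.norm_natCast, ← hq]
      refine pow_le_pow_left₀ (by positivity) ?_ n
      rw [div_le_iff₀ (by positivity)]
      refine (ht i).trans_eq ?_
      field_simp)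
  refine this.trans_eq ?_
  congr 1
  rw [← pow_mul, ← pow_mul, ← pow_mul]
  congr 1; ring

lemma locC_nonneg (r : ℕ) : 0 ≤ locC r := by unfold locC; positivity

/-! ### The global product -/

variable {K : Type} [Field K] [Fintype K]

/-- The sum is bounded in terms of `v` alone because `q v ^ (-12) = v ^ (-4)`. -/
lemma summable_loc {v : ℝ} (hv : 1 < v) (hq : v ^ 8 = Fintype.card K) :
    Summable (fun cp : ClosedPoint K => (v⁻¹ ^ 12) ^ cpDeg cp) ∧
    ∑' cp : ClosedPoint K, (v⁻¹ ^ 12) ^ cpDeg cp ≤ (1 - v⁻¹ ^ 4)⁻¹ + 1 := by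
  have hv0 : 0 < v := by linarith
  have e : (Fintype.card K : ℝ) * v⁻¹ ^ 12 = v⁻¹ ^ 4 := by rw [← hq]; field_simp
  have := summable_cpDeg (K := K) (v⁻¹ ^ 12) (by positivity)
    (e ▸ pow_lt_one₀ (by positivity) (inv_lt_one_of_one_lt₀ hv) (by norm_num))
  rwa [e] at this

lemma norm_prod_locP_le {v : ℝ} (hv : 1 < v) (hq : v ^ 8 = Fintype.card K) (t : Fin r → ℂ)
    (ht : ∀ i, ‖t i‖ ≤ v ^ 2) (S : Finset (ClosedPoint K)) :
    ‖∏ cp ∈ S, locP (Fintype.card K) r (cpDeg cp) t‖ ≤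
      Real.exp (locC r * ((1 - v⁻¹ ^ 4)⁻¹ + 1)) := by
  have hv0 : 0 < v := by linarith
  obtain ⟨hs, hs'⟩ := summable_loc hv hq
  have h := Finset.norm_prod_one_add_sub_one_le S
    (fun cp : ClosedPoint K => locP (Fintype.card K) r (cpDeg cp) t - 1)
  simp only [add_sub_cancel] at h
  have h2 : ∑ cp ∈ S, ‖locP (Fintype.card K) r (cpDeg cp) t - 1‖ ≤
      locC r * ((1 - v⁻¹ ^ 4)⁻¹ + 1) := by
    calc _ ≤ ∑ cp ∈ S, locC r * (v⁻¹ ^ 12) ^ cpDeg cp :=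
          Finset.sum_le_sum fun cp _ => norm_locP_sub_one_le_pow _ _ hv hq t ht
      _ = locC r * ∑ cp ∈ S, (v⁻¹ ^ 12) ^ cpDeg cp := by rw [Finset.mul_sum]
      _ ≤ _ := mul_le_mul_of_nonneg_left
          ((hs.sum_le_tsum S fun _ _ => by positivity).trans hs') (locC_nonneg r)
  have h3 := norm_add_le (∏ cp ∈ S, locP (Fintype.card K) r (cpDeg cp) t - 1) 1
  rw [sub_add_cancel, norm_one] at h3
  have h4 := Real.exp_le_exp.mpr h2
  linarith

lemma tendsto_tau (hr : 1 ≤ r) {v : ℝ} (hv : 1 < v) (hq : v ^ 8 = Fintype.card K) :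
    Tendsto (fun S : Finset (ClosedPoint K) =>
      ∏ cp ∈ S, locP (Fintype.card K) r (cpDeg cp) (fun _ => 1)) atTop
      (𝓝 ((∏' cp : ClosedPoint K, tauFactor (Fintype.card K) r (cpDeg cp) : ℝ) : ℂ)) := by
  have hs : Summable (fun cp : ClosedPoint K =>
      ‖tauFactor (Fintype.card K) r (cpDeg cp) - 1‖) := by
    refine Summable.of_nonneg_of_le (fun _ => norm_nonneg _) (fun cp => ?_)
      ((summable_loc hv hq).1.mul_left (locC r))
    have := norm_locP_sub_one_le_pow (r := r) (Fintype.card K) (cpDeg cp) hv hq (fun _ => 1)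
      (fun i => by rw [norm_one]; exact one_le_pow₀ hv.le)
    rw [locP_one _ _ _ hr, ← Complex.ofReal_one, ← Complex.ofReal_sub, Complex.norm_real] at this
    exact this
  have hm := multipliable_one_add_of_summable hs
  simp only [add_sub_cancel] at hm
  have h1 := (Complex.continuous_ofReal.tendsto _).comp hm.hasProd
  simp only [SummationFilter.unconditional_filter] at h1
  refine h1.congr fun S => ?_
  simp [locP_one _ _ _ hr, Complex.ofReal_prod]

lemma tendstoUniformlyOn_locP {v : ℝ} (hv : 1 < v) (hq : v ^ 8 = Fintype.card K) :
    TendstoUniformlyOn (fun (S : Finset (ClosedPoint K)) (t : Fin r → ℂ) =>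
        ∏ cp ∈ S, locP (Fintype.card K) r (cpDeg cp) t)
      (fun t => ∏' cp : ClosedPoint K, locP (Fintype.card K) r (cpDeg cp) t) atTop
      (Metric.closedBall 0 (1 / 2)) := by
  have hle : ∀ t ∈ Metric.closedBall (0 : Fin r → ℂ) (1 / 2), ∀ i, ‖t i‖ ≤ v ^ 2 := by
    intro t ht i
    rw [mem_closedBall_zero_iff] at ht
    exact (norm_le_pi_norm t i).trans (ht.trans (by nlinarith))
  have := Summable.hasProdUniformlyOn_one_add
    (f := fun (cp : ClosedPoint K) (t : Fin r → ℂ) => locP (Fintype.card K) r (cpDeg cp) t - 1)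
    (isCompact_closedBall (0 : Fin r → ℂ) (1 / 2)) ((summable_loc hv hq).1.mul_left (locC r))
    (Eventually.of_forall fun cp t ht => norm_locP_sub_one_le_pow _ _ hv hq t (hle t ht))
    (fun cp => ((continuous_locP _ _).sub continuous_const).continuousOn)
  simp only [add_sub_cancel] at this
  exact hasProdUniformlyOn_iff_tendstoUniformlyOn.mp this

/-- The height zeta function, divided by the zeta functions of `ℙ¹` at the points `t i / q`, is the
product of the `locP`. The restriction to `‖t i‖ = 1 / 2` stays inside the disc of convergence of
the Euler product. -/
lemma tprod_Lam {v : ℝ} (hv : 1 < v) (hq : v ^ 8 = Fintype.card K) (t : Fin r → ℂ)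
    (ht : ∀ i, ‖t i‖ = 1 / 2) :
    ∏' cp : ClosedPoint K, Lam (Fintype.card K) r (cpDeg cp) t =
      (∏' cp : ClosedPoint K, locP (Fintype.card K) r (cpDeg cp) t) *
        ∏ i, ((1 - t i * 1)⁻¹ * (1 - t i * (Fintype.card K : ℂ)⁻¹)⁻¹) := by
  have hq1 : (1 : ℝ) ≤ Fintype.card K := by exact_mod_cast Fintype.card_pos
  have hq0 : (Fintype.card K : ℂ) ≠ 0 := by exact_mod_cast Fintype.card_ne_zero
  have hu : ∀ i, Fintype.card K * ‖t i / (Fintype.card K : ℂ)‖ < 1 := fun i => by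
    rw [norm_div, ht, Complex.norm_natCast, mul_div_cancel₀ _ (by positivity)]
    norm_num
  have hu1 : ∀ i, ‖t i / (Fintype.card K : ℂ)‖ < 1 := fun i =>
    lt_of_le_of_lt (le_mul_of_one_le_left (norm_nonneg _) hq1) (hu i)
  have hne : ∀ i, ∀ cp : ClosedPoint K, (t i / (Fintype.card K : ℂ)) ^ cpDeg cp ≠ 1 := by
    intro i cp h
    have h1 := congrArg norm h
    rw [norm_pow, norm_one] at h1
    exact (pow_lt_one₀ (norm_nonneg _) (hu1 i) (Nat.one_le_iff_ne_zero.mp (cpDeg_pos cp))).ne h1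
  have hsub : ∀ w : ℂ, ‖w‖ < 1 → 1 - w ≠ 0 := by
    intro w hw h
    rw [← sub_eq_zero.mp h, norm_one] at hw
    exact lt_irrefl _ hw
  have hinv : ∀ i ∈ Finset.univ, HasProd
      (fun cp : ClosedPoint K => (1 - (t i / (Fintype.card K : ℂ)) ^ cpDeg cp)⁻¹)
      ((1 - t i * 1)⁻¹ * (1 - t i * (Fintype.card K : ℂ)⁻¹)⁻¹) := by
    intro i _
    have h1 := hasProd_zeta (K := K) _ (hu i)
    have h2 := Tendsto.inv₀ h1 (mul_ne_zero (hsub _ (by simpa using hu i)) (hsub _ (hu1 i)))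
    rw [mul_inv, mul_div_cancel₀ _ hq0, div_eq_mul_inv] at h2
    rw [HasProd, mul_one]
    refine h2.congr fun S => ?_
    rw [Finset.prod_inv_distrib, div_eq_mul_inv]
  have hP : HasProd (fun cp : ClosedPoint K => locP (Fintype.card K) r (cpDeg cp) t)
      (∏' cp : ClosedPoint K, locP (Fintype.card K) r (cpDeg cp) t) := by
    refine Multipliable.hasProd ?_
    have hs : Summable (fun cp : ClosedPoint K =>
        ‖locP (Fintype.card K) r (cpDeg cp) t - 1‖) :=
      Summable.of_nonneg_of_le (fun _ => norm_nonneg _)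
        (fun cp => norm_locP_sub_one_le_pow _ _ hv hq t (fun i => by rw [ht]; nlinarith))
        ((summable_loc hv hq).1.mul_left (locC r))
    simpa only [add_sub_cancel] using multipliable_one_add_of_summable hs
  refine HasProd.tprod_eq ?_
  convert! hP.mul (hasProd_prod hinv) using 1
  funext cp
  rw [← Lam_mul_prod _ _ _ _ (fun i => hne i cp), mul_assoc, ← Finset.prod_mul_distrib,
    Finset.prod_eq_one, mul_one]
  intro i _
  exact mul_inv_cancel₀ (sub_ne_zero.mpr (hne i cp).symm)

lemma norm_prod_inv_le (z : ℂ) (t : Fin r → ℂ) {θ : ℝ} (hθ : θ < 1) (ht : ∀ i, ‖t i * z‖ ≤ θ) :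
    ‖∏ i, (1 - t i * z)⁻¹‖ ≤ (1 - θ)⁻¹ ^ r := by
  rw [norm_prod]
  have h : ∏ _i : Fin r, (1 - θ)⁻¹ = (1 - θ)⁻¹ ^ r := by simp
  rw [← h]
  refine Finset.prod_le_prod (fun i _ => norm_nonneg _) fun i _ => ?_
  rw [norm_inv]
  refine inv_anti₀ (sub_pos.mpr hθ) ?_
  have := norm_sub_norm_le 1 (t i * z)
  rw [norm_one] at this
  linarith [ht i]

/-- The estimate for a fixed field, with `v = q ^ (1 / 8)`. For a finite set `S` of closed points,
`G S` is the product of the `locP` over `S`, and `h S` are the coefficients of `G S * W`. The bound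
of `partial_sum_bound` does not depend on `S`, and passes to the limit over `S`. -/
lemma coef_bound (hr : 1 ≤ r) {v : ℝ} (hv : 1 < v) (hq : v ^ 8 = Fintype.card K)
    (k : Fin r → ℕ) (N : ℕ) (hN : ∀ i, N ≤ k i) (coef : (Fin r → ℕ) → ℂ)
    (hcoef : ∀ t : Fin r → ℂ, (∀ i, ‖t i‖ < 1) →
      HasSum (fun m : Fin r → ℕ => coef m * ∏ i, t i ^ m i)
        (∏' cp : ClosedPoint K, Lam (Fintype.card K) r (cpDeg cp) t)) :
    ‖coef k - ((((1 - (Fintype.card K : ℝ)⁻¹)⁻¹) ^ r *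
        ∏' cp : ClosedPoint K, tauFactor (Fintype.card K) r (cpDeg cp) : ℝ) : ℂ)‖ ≤
      (Real.exp (locC r * ((1 - v⁻¹ ^ 4)⁻¹ + 1)) * (1 - v⁻¹ ^ 6)⁻¹ ^ r) * v⁻¹ ^ N *
        (1 - v⁻¹)⁻¹ ^ r := by
  have hv0 : 0 < v := by linarith
  have hvi : v⁻¹ < 1 := inv_lt_one_of_one_lt₀ hv
  have hq1 : (1 : ℝ) ≤ Fintype.card K := by exact_mod_cast Fintype.card_pos
  let W : (Fin r → ℂ) → ℂ := fun t => ∏ i, (1 - t i * (Fintype.card K : ℂ)⁻¹)⁻¹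
  let G : Finset (ClosedPoint K) → (Fin r → ℂ) → ℂ := fun S t =>
    ∏ cp ∈ S, locP (Fintype.card K) r (cpDeg cp) t
  have hWle : ∀ t : Fin r → ℂ, (∀ i, ‖t i‖ ≤ v ^ 2) → ‖W t‖ ≤ (1 - v⁻¹ ^ 6)⁻¹ ^ r :=
    fun t ht => norm_prod_inv_le _ t (pow_lt_one₀ (by positivity) hvi (by norm_num)) fun i => by
      rw [norm_mul, norm_inv, Complex.norm_natCast, ← hq]
      refine (mul_le_mul_of_nonneg_right (ht i) (by positivity)).trans_eq ?_
      field_simp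
  have hW : W ∈ psAlg r (v ^ 2) := by
    refine ⟨_, isPS_geom _ ?_⟩
    rw [norm_inv, Complex.norm_natCast, ← hq]
    have : v ^ 2 * (v ^ 8)⁻¹ = v⁻¹ ^ 6 := by field_simp
    rw [this]
    exact pow_lt_one₀ (by positivity) hvi (by norm_num)
  have hH : ∀ S, ∃ h, IsPS (v ^ 2) h (fun t => G S t * W t) := by
    intro S
    have hG : G S ∈ psAlg r (v ^ 2) := prod_mem_psAlg S fun cp _ => locP_mem _ _
    exact mem_psAlg.mp (mul_mem_psAlg hG hW)
  choose h hh using hH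
  have hbound : ∀ S, ‖conv (h S) (fun _ => 1) k - G S (fun _ => 1) * W (fun _ => 1)‖ ≤
      (Real.exp (locC r * ((1 - v⁻¹ ^ 4)⁻¹ + 1)) * (1 - v⁻¹ ^ 6)⁻¹ ^ r) * v⁻¹ ^ N *
        (1 - v⁻¹)⁻¹ ^ r := fun S => by
    refine partial_sum_bound hv (hh S) (fun t ht => ?_) k N hN
    rw [norm_mul]
    exact mul_le_mul (norm_prod_locP_le hv hq t ht S) (hWle t ht) (norm_nonneg _)
      (Real.exp_nonneg _)
  -- The value of `locP` at `(1, …, 1)` is `tauFactor`.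
  have hlim1 : Tendsto (fun S => G S (fun _ => 1) * W (fun _ => 1)) atTop
      (𝓝 ((((1 - (Fintype.card K : ℝ)⁻¹)⁻¹) ^ r *
        ∏' cp : ClosedPoint K, tauFactor (Fintype.card K) r (cpDeg cp) : ℝ) : ℂ)) := by
    have h1 := (tendsto_tau (K := K) hr hv hq).mul_const (W (fun _ => 1))
    convert! h1 using 2
    simp [W, mul_comm]
  -- On the polycircle of radius `1 / 2` the truncated products converge uniformly to the zeta
  -- function, so by Cauchy's estimate their coefficients converge too.
  have hlim2 : Tendsto (fun S => conv (h S) (fun _ => 1) k) atTop (𝓝 (coef k)) := by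
    rw [Metric.tendsto_nhds]
    intro ε hε
    let B : ℝ := 2 ^ r * (1 - v⁻¹ ^ 6)⁻¹ ^ r
    have h6 : 0 < 1 - v⁻¹ ^ 6 := sub_pos.mpr (pow_lt_one₀ (by positivity) hvi (by norm_num))
    have hB : 0 < B := by positivity
    have hρ : 0 < ∏ i, (1 / 2 : ℝ) ^ k i := Finset.prod_pos fun i _ => by positivity
    have hu := Metric.tendstoUniformlyOn_iff.mp (tendstoUniformlyOn_locP (r := r) hv hq)
      (ε * (∏ i, (1 / 2 : ℝ) ^ k i) / (2 * B)) (by positivity)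
    filter_upwards [hu] with S hS
    have hle : ∀ t : Fin r → ℂ, (∀ i, ‖t i‖ = 1 / 2) → ∀ i, ‖t i‖ ≤ v ^ 2 := by
      intro t ht i
      rw [ht]; nlinarith
    have hone : IsPS (r := r) (1 / 2) (fun _ => 1) (fun t => ∏ i, (1 - t i * 1)⁻¹) := by
      simpa using isPS_geom (r := r) (R := 1 / 2) 1 (by norm_num)
    have hZ := ((hh S).mono (R' := 1 / 2) (by nlinarith)).mul hone
    have key := cauchy_estimate (a := conv (h S) (fun _ => 1) - coef)
      (F := fun t => G S t * W t * ∏ i, (1 - t i * 1)⁻¹ -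
        ∏' cp : ClosedPoint K, Lam (Fintype.card K) r (cpDeg cp) t)
      (ρ := 1 / 2) (M := ε * (∏ i, (1 / 2 : ℝ) ^ k i) / 2) (by norm_num) ?_ ?_ k
    · rw [dist_eq_norm]
      rw [Pi.sub_apply] at key
      have : ‖conv (h S) (fun _ => 1) k - coef k‖ ≤ ε / 2 := by
        refine le_of_mul_le_mul_right (key.trans_eq ?_) hρ
        ring
      linarith
    · intro t ht
      simpa only [Pi.sub_apply, sub_mul] using
        (hZ t (fun i => (ht i).le)).sub (hcoef t (fun i => by rw [ht]; norm_num))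
    · intro t ht
      have hmem : t ∈ Metric.closedBall (0 : Fin r → ℂ) (1 / 2) := by
        rw [mem_closedBall_zero_iff]
        exact (pi_norm_le_iff_of_nonneg (by norm_num)).mpr fun i => (ht i).le
      have h1 := (hS t hmem).le
      have h2 : ‖∏ i, (1 - t i * 1)⁻¹‖ ≤ 2 ^ r := by
        have := norm_prod_inv_le (1 : ℂ) t (θ := 1 / 2) (by norm_num)
          (fun i => by rw [mul_one, ht])
        norm_num at this ⊢
        exact this
      have e : G S t * W t * ∏ i, (1 - t i * 1)⁻¹ -
          ∏' cp : ClosedPoint K, Lam (Fintype.card K) r (cpDeg cp) t =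
          (G S t - ∏' cp : ClosedPoint K, locP (Fintype.card K) r (cpDeg cp) t) *
            ((∏ i, (1 - t i * 1)⁻¹) * W t) := by
        rw [tprod_Lam hv hq t ht, Finset.prod_mul_distrib]
        simp only [W]
        ring
      simp only [e]
      rw [norm_mul, norm_mul, ← dist_eq_norm, dist_comm]
      calc _ ≤ (ε * (∏ i, (1 / 2 : ℝ) ^ k i) / (2 * B)) * B := by
            have := hWle t (hle t ht)
            gcongr
            exact mul_le_mul h2 this (norm_nonneg _) (by positivity)
        _ = _ := by field_simp
  exact le_of_tendsto (hlim2.sub hlim1).norm (Eventually.of_forall hbound)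

end Assembly

/-! ### Uniformity in the field -/

/-- For every `r ≥ 1` there are `η > 0` and `A ≥ 1`, depending only on `r` and not on
`q` or `𝐤`, such that for every finite field of cardinality `q` and every tuple `𝐤` of
positive integers, the Taylor coefficient `c_𝐤(q)` of `Z(t) = ∏_c Λ_c(t)` satisfies
`|c_𝐤(q) − (1−q^{−1})^{−r} ∏_c (1−q^{−|c|})^{r+2}(1+(r+2)q^{−|c|}+q^{−2|c|})|
  ≤ A q^{−η minᵢ kᵢ}`. -/
theorem taylor_coefficient_limit (r : ℕ) (hr : 1 ≤ r) :
    ∃ η A : ℝ, 0 < η ∧ 1 ≤ A ∧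
      ∀ (K : Type) [Field K] [Fintype K],
      ∀ k : Fin r → ℕ, (∀ i, 1 ≤ k i) →
      ∀ coef : (Fin r → ℕ) → ℂ,
        (∀ t : Fin r → ℂ, (∀ i, ‖t i‖ < 1) →
          HasSum (fun m : Fin r → ℕ => coef m * ∏ i, t i ^ m i)
            (∏' cp : ClosedPoint K, Lam (Fintype.card K) r (cpDeg cp) t)) →
        ‖coef k - ((((1 - (Fintype.card K : ℝ)⁻¹)⁻¹) ^ r *
            ∏' cp : ClosedPoint K, tauFactor (Fintype.card K) r (cpDeg cp) : ℝ) : ℂ)‖ ≤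
          A * (Fintype.card K : ℝ) ^ (-(η * ((sInf (Set.range k) : ℕ) : ℝ))) := by
  -- The constants for the smallest possible value `v₀` of `v = q ^ (1 / 8)`, attained at `q = 2`.
  set v₀ : ℝ := (2 : ℝ) ^ (1 / 8 : ℝ) with hv₀
  have hv₀1 : 1 < v₀ := Real.one_lt_rpow (by norm_num) (by norm_num)
  refine ⟨1 / 8, max 1 ((Real.exp (locC r * ((1 - v₀⁻¹ ^ 4)⁻¹ + 1)) * (1 - v₀⁻¹ ^ 6)⁻¹ ^ r) *
    (1 - v₀⁻¹)⁻¹ ^ r), by norm_num, le_max_left _ _, ?_⟩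
  intro K _ _ k _ coef hcoef
  have hq2 : (2 : ℝ) ≤ Fintype.card K := by exact_mod_cast Fintype.one_lt_card (α := K)
  have hq0 : (0 : ℝ) ≤ Fintype.card K := by linarith
  set v : ℝ := (Fintype.card K : ℝ) ^ (1 / 8 : ℝ) with hv
  have hvv : v₀ ≤ v := Real.rpow_le_rpow (by norm_num) hq2 (by norm_num)
  have hv1 : 1 < v := hv₀1.trans_le hvv
  have hv8 : v ^ 8 = Fintype.card K := by
    rw [hv, ← Real.rpow_natCast, ← Real.rpow_mul hq0]
    norm_num
  have hmain := coef_bound hr hv1 hv8 k (sInf (Set.range k))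
    (fun i => Nat.sInf_le (Set.mem_range_self i)) coef hcoef
  have hpow : v⁻¹ ^ sInf (Set.range k) =
      (Fintype.card K : ℝ) ^ (-(1 / 8 * ((sInf (Set.range k) : ℕ) : ℝ))) := by
    rw [Real.rpow_neg hq0, Real.rpow_mul hq0, Real.rpow_natCast, inv_pow]
  rw [← hpow]
  have hv₀0 : 0 < v₀ := by linarith
  have hinv : v⁻¹ ≤ v₀⁻¹ := inv_anti₀ hv₀0 hvv
  have hvi : 0 ≤ v⁻¹ := inv_nonneg.mpr (by linarith)
  have hlt : v₀⁻¹ < 1 := inv_lt_one_of_one_lt₀ hv₀1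
  have hmono : ∀ n : ℕ, n ≠ 0 → 0 < 1 - v₀⁻¹ ^ n ∧ 0 < 1 - v⁻¹ ^ n ∧
      (1 - v⁻¹ ^ n)⁻¹ ≤ (1 - v₀⁻¹ ^ n)⁻¹ := by
    intro n hn
    have h1 : v₀⁻¹ ^ n < 1 := pow_lt_one₀ (by positivity) hlt hn
    have h2 : v⁻¹ ^ n ≤ v₀⁻¹ ^ n := pow_le_pow_left₀ hvi hinv n
    have h3 : 0 < 1 - v₀⁻¹ ^ n := by linarith
    exact ⟨h3, by linarith, inv_anti₀ h3 (by linarith)⟩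
  obtain ⟨p4, q4, h4⟩ := hmono 4 (by norm_num)
  obtain ⟨p6, q6, h6⟩ := hmono 6 (by norm_num)
  obtain ⟨p1, q1, h1⟩ := hmono 1 (by norm_num)
  rw [pow_one, pow_one] at h1
  rw [pow_one] at p1 q1
  have hC := locC_nonneg r
  refine hmain.trans ?_
  rw [mul_right_comm]
  refine mul_le_mul_of_nonneg_right (le_trans ?_ (le_max_right _ _)) (by positivity)
  gcongr

end
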